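/- Let (T, 𝒯, μ) be a measure space, d, H ∈ ℕ with H ≥ 1, G, M ≥ 0, R > 0, γ ∈ (0, 1). Let R_f : T → ℝ be measurable with 0 ≤ R_f(τ) ≤ R/(1 − γ) for all τ, and let p : ℝ^d × T → (0, ∞) be such that each p(θ, ·) is measurable with ∫_T p(θ, τ) dμ(τ) = 1, each θ ↦ p(θ, τ) is twice differentiable, and for all θ, τ: ‖∇_θ log p(θ, τ)‖₂ ≤ H·G and ‖∇²_θ log p(θ, τ)‖_op ≤ H·M. Suppose J(θ) = ∫_T R_f(τ) p(θ, τ) dμ(τ) is twice differentiable with ∇²J(θ) = ∫_T R_f(τ) ∇²_θ p(θ, τ) dμ(τ) for all θ (differentiation under the integral). Then for all θ, ‖∇²J(θ)‖_op ≤ H·R·(M + H·G²)/(1 − γ); in particular ∇J is Lipschitz continuous with constant L = H·R·(M + H·G²)/(1 − γ), i.e. J is L-smooth. -/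

import Mathlib

open MeasureTheory

/-!
For a positive density `p`, differentiating `∇p = p • ∇ log p` once more gives
`∇²p = p • (∇² log p + ∇ log p ⊗ ∇ log p)`. Hence the bounds `g` on the score and `m` on the
log-density Hessian yield `‖∇²p‖ ≤ (m + g²) p`. As `p` has total mass one, integrating against
rewards bounded by `B` gives `‖∇²J‖ ≤ B (m + g²)`, and the mean value inequality turns this
Hessian bound into a Lipschitz constant for `∇J`.
-/

open scoped Topology

/-- The performance function `J(θ) = ∫ r(τ) p(θ, τ) dμ(τ)`: the expected return of a trajectory
drawn from the density `p θ`. -/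
noncomputable def performanceFunction {Θ T : Type*} [MeasurableSpace T] (μ : Measure T) (r : T → ℝ)
    (p : Θ → T → ℝ) (θ : Θ) : ℝ :=
  ∫ τ, r τ * p θ τ ∂μ

section NormedSpace

variable {E : Type*} [NormedAddCommGroup E] [NormedSpace ℝ E]

theorem norm_iteratedFDeriv_two {F : Type*} [NormedAddCommGroup F] [NormedSpace ℝ F]
    (f : E → F) (x : E) : ‖iteratedFDeriv ℝ 2 f x‖ = ‖fderiv ℝ (fderiv ℝ f) x‖ := by
  rw [← norm_iteratedFDeriv_one, norm_iteratedFDeriv_fderiv]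

theorem differentiable_fderiv_of_contDiff_two {F : Type*} [NormedAddCommGroup F]
    [NormedSpace ℝ F] {f : E → F} (hf : ContDiff ℝ 2 f) : Differentiable ℝ (fderiv ℝ f) :=
  (hf.fderiv_right one_add_one_eq_two.le).differentiable one_ne_zero

theorem fderiv_eq_smul_fderiv_log {f : E → ℝ} {x : E} (hf : DifferentiableAt ℝ f x)
    (hx : f x ≠ 0) : fderiv ℝ f x = f x • fderiv ℝ (fun y => Real.log (f y)) x := by
  rw [fderiv.log hf hx, smul_inv_smul₀ hx]

theorem differentiableAt_fderiv_log {f : E → ℝ} {x : E}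
    (hf : ∀ᶠ y in 𝓝 x, DifferentiableAt ℝ f y) (hf' : DifferentiableAt ℝ (fderiv ℝ f) x)
    (hx : f x ≠ 0) : DifferentiableAt ℝ (fderiv ℝ fun y => Real.log (f y)) x := by
  have hfx := hf.self_of_nhds
  have hlog : (fderiv ℝ fun y => Real.log (f y)) =ᶠ[𝓝 x] fun y => (f y)⁻¹ • fderiv ℝ f y := by
    filter_upwards [hf, hfx.continuousAt.eventually_ne hx] with y hy hy0
    exact fderiv.log hy hy0
  exact ((hfx.fun_inv hx).fun_smul hf').congr_of_eventuallyEq hlog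

theorem fderiv_fderiv_eq_smul_log {f : E → ℝ} {x : E}
    (hf : ∀ᶠ y in 𝓝 x, DifferentiableAt ℝ f y) (hf' : DifferentiableAt ℝ (fderiv ℝ f) x)
    (hx : f x ≠ 0) :
    fderiv ℝ (fderiv ℝ f) x = f x • (fderiv ℝ (fderiv ℝ fun y => Real.log (f y)) x +
      (fderiv ℝ (fun y => Real.log (f y)) x).smulRight
        (fderiv ℝ (fun y => Real.log (f y)) x)) := by
  have hfx := hf.self_of_nhds
  have hlog : fderiv ℝ f =ᶠ[𝓝 x] fun y => f y • fderiv ℝ (fun z => Real.log (f z)) y := by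
    filter_upwards [hf, hfx.continuousAt.eventually_ne hx] with y hy hy0
    exact fderiv_eq_smul_fderiv_log hy hy0
  rw [hlog.fderiv_eq, fderiv_fun_smul hfx (differentiableAt_fderiv_log hf hf' hx),
    fderiv_eq_smul_fderiv_log hfx hx]
  ext v w
  simp [mul_assoc]

theorem norm_iteratedFDeriv_two_le_log {f : E → ℝ} {x : E}
    (hf : ∀ᶠ y in 𝓝 x, DifferentiableAt ℝ f y) (hf' : DifferentiableAt ℝ (fderiv ℝ f) x)
    (hx : f x ≠ 0) :
    ‖iteratedFDeriv ℝ 2 f x‖ ≤ |f x| * (‖iteratedFDeriv ℝ 2 (fun y => Real.log (f y)) x‖ +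
      ‖fderiv ℝ (fun y => Real.log (f y)) x‖ ^ 2) := by
  rw [norm_iteratedFDeriv_two, norm_iteratedFDeriv_two, fderiv_fderiv_eq_smul_log hf hf' hx, sq,
    ← ContinuousLinearMap.norm_smulRight_apply, ← Real.norm_eq_abs]
  refine (ContinuousLinearMap.opNorm_smul_le _ _).trans ?_
  gcongr
  exact ContinuousLinearMap.opNorm_add_le _ _

variable {T : Type*} [MeasurableSpace T] {μ : Measure T}

theorem norm_integral_smul_iteratedFDeriv_two_le {r : T → ℝ} {p : E → T → ℝ} {B g m : ℝ} {θ : E}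
    (hr : ∀ᵐ τ ∂μ, |r τ| ≤ B) (hp_pos : ∀ᵐ τ ∂μ, 0 < p θ τ) (hp_norm : ∫ τ, p θ τ ∂μ = 1)
    (hp : ∀ᵐ τ ∂μ, ∀ᶠ θ' in 𝓝 θ, DifferentiableAt ℝ (fun ξ => p ξ τ) θ')
    (hp' : ∀ᵐ τ ∂μ, DifferentiableAt ℝ (fderiv ℝ fun ξ => p ξ τ) θ)
    (hscore : ∀ᵐ τ ∂μ, ‖fderiv ℝ (fun ξ => Real.log (p ξ τ)) θ‖ ≤ g)
    (hloghess : ∀ᵐ τ ∂μ, ‖iteratedFDeriv ℝ 2 (fun ξ => Real.log (p ξ τ)) θ‖ ≤ m) :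
    ‖∫ τ, r τ • iteratedFDeriv ℝ 2 (fun ξ => p ξ τ) θ ∂μ‖ ≤ B * (m + g ^ 2) := by
  have hp_int : Integrable (p θ) μ := .of_integral_ne_zero (hp_norm ▸ one_ne_zero)
  have hbound : ∀ᵐ τ ∂μ,
      ‖r τ • iteratedFDeriv ℝ 2 (fun ξ => p ξ τ) θ‖ ≤ B * (m + g ^ 2) * p θ τ := by
    filter_upwards [hr, hp_pos, hp, hp', hscore, hloghess] with τ hrτ hpos hd hd' hg hm
    have hhess : ‖iteratedFDeriv ℝ 2 (fun ξ => p ξ τ) θ‖ ≤ p θ τ * (m + g ^ 2) := by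
      refine (norm_iteratedFDeriv_two_le_log hd hd' hpos.ne').trans ?_
      rw [abs_of_pos hpos]
      gcongr
    calc
      ‖r τ • iteratedFDeriv ℝ 2 (fun ξ => p ξ τ) θ‖
          = |r τ| * ‖iteratedFDeriv ℝ 2 (fun ξ => p ξ τ) θ‖ := norm_smul _ _
      _ ≤ B * (p θ τ * (m + g ^ 2)) :=
        mul_le_mul hrτ hhess (norm_nonneg _) ((abs_nonneg _).trans hrτ)
      _ = B * (m + g ^ 2) * p θ τ := by ring
  calc
    ‖∫ τ, r τ • iteratedFDeriv ℝ 2 (fun ξ => p ξ τ) θ ∂μ‖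
        ≤ ∫ τ, B * (m + g ^ 2) * p θ τ ∂μ :=
      norm_integral_le_of_norm_le (hp_int.const_mul _) hbound
    _ = B * (m + g ^ 2) := by rw [integral_const_mul, hp_norm, mul_one]

end NormedSpace

section InnerProductSpace

variable {E : Type*} [NormedAddCommGroup E] [InnerProductSpace ℝ E] [CompleteSpace E]

theorem norm_gradient (f : E → ℝ) (x : E) : ‖gradient f x‖ = ‖fderiv ℝ f x‖ :=
  LinearIsometryEquiv.norm_map _ _

/-- `L`-smoothness in the sense of optimization. Differentiability is a separate field because
`gradient` takes the value `0` where the function is not differentiable. -/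
structure IsLSmooth (L : ℝ) (f : E → ℝ) : Prop where
  differentiable : Differentiable ℝ f
  norm_gradient_sub_le : ∀ x y, ‖gradient f x - gradient f y‖ ≤ L * ‖x - y‖

theorem IsLSmooth.of_norm_iteratedFDeriv_two_le {f : E → ℝ} {L : ℝ} (hf : Differentiable ℝ f)
    (hf' : Differentiable ℝ (fderiv ℝ f)) (hL : ∀ x, ‖iteratedFDeriv ℝ 2 f x‖ ≤ L) :
    IsLSmooth L f where
  differentiable := hf
  norm_gradient_sub_le x y := by
    rw [gradient, gradient, ← map_sub, LinearIsometryEquiv.norm_map]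
    exact convex_univ.norm_image_sub_le_of_norm_fderiv_le (fun z _ => hf' z)
      (fun z _ => norm_iteratedFDeriv_two f z ▸ hL z) (Set.mem_univ y) (Set.mem_univ x)

theorem performance_function_smooth_general {T : Type*} [MeasurableSpace T] {μ : Measure T}
    {r : T → ℝ} {p : E → T → ℝ} {B g m : ℝ} (hr : ∀ᵐ τ ∂μ, |r τ| ≤ B)
    (hp_pos : ∀ θ, ∀ᵐ τ ∂μ, 0 < p θ τ) (hp_norm : ∀ θ, ∫ τ, p θ τ ∂μ = 1)
    (hp : ∀ᵐ τ ∂μ, Differentiable ℝ fun θ => p θ τ)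
    (hp' : ∀ᵐ τ ∂μ, Differentiable ℝ (fderiv ℝ fun θ => p θ τ))
    (hscore : ∀ θ, ∀ᵐ τ ∂μ, ‖gradient (fun ξ => Real.log (p ξ τ)) θ‖ ≤ g)
    (hloghess : ∀ θ, ∀ᵐ τ ∂μ, ‖iteratedFDeriv ℝ 2 (fun ξ => Real.log (p ξ τ)) θ‖ ≤ m)
    (hJ : Differentiable ℝ (performanceFunction μ r p))
    (hJ' : Differentiable ℝ (fderiv ℝ (performanceFunction μ r p)))
    (hJ_hess : ∀ θ, iteratedFDeriv ℝ 2 (performanceFunction μ r p) θ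
      = ∫ τ, r τ • iteratedFDeriv ℝ 2 (fun ξ => p ξ τ) θ ∂μ) :
    (∀ θ, ‖iteratedFDeriv ℝ 2 (performanceFunction μ r p) θ‖ ≤ B * (m + g ^ 2)) ∧
      IsLSmooth (B * (m + g ^ 2)) (performanceFunction μ r p) := by
  simp only [norm_gradient] at hscore
  have hhess : ∀ θ, ‖iteratedFDeriv ℝ 2 (performanceFunction μ r p) θ‖ ≤ B * (m + g ^ 2) := by
    intro θ
    rw [hJ_hess θ]
    exact norm_integral_smul_iteratedFDeriv_two_le hr (hp_pos θ) (hp_norm θ)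
      (hp.mono fun τ h => .of_forall h) (hp'.mono fun τ h => h θ) (hscore θ) (hloghess θ)
  exact ⟨hhess, .of_norm_iteratedFDeriv_two_le hJ hJ' hhess⟩

end InnerProductSpace

/-- Smoothness of the performance function `J(θ) = ∫ R_f(τ) p(θ,τ) dμ(τ)`: under the
trajectory score bound `H·G` and log-density Hessian bound `H·M`, with rewards in
`[0, R/(1-γ)]` and differentiation under the integral sign, the Hessian of `J` is
bounded by `L = H·R·(M + H·G²)/(1-γ)` in operator norm, and `∇J` is `L`-Lipschitz. -/
theorem performance_function_smooth {T : Type*} [MeasurableSpace T] (μ : Measure T)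
    {d H : ℕ} (hH : 1 ≤ H) (G M R γ : ℝ) (hG : 0 ≤ G) (hM : 0 ≤ M)
    (hR : 0 < R) (hγ : γ ∈ Set.Ioo (0 : ℝ) 1)
    (Rf : T → ℝ) (hRf_meas : Measurable Rf)
    (hRf : ∀ τ, Rf τ ∈ Set.Icc (0 : ℝ) (R / (1 - γ)))
    (p : EuclideanSpace ℝ (Fin d) → T → ℝ)
    (hp_meas : ∀ θ, Measurable (p θ))
    (hp_pos : ∀ θ τ, 0 < p θ τ)
    (hp_norm : ∀ θ, ∫ τ, p θ τ ∂μ = 1)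
    (hp_smooth : ∀ τ, ContDiff ℝ 2 (fun θ => p θ τ))
    (hscore : ∀ θ τ, ‖gradient (fun θ' => Real.log (p θ' τ)) θ‖ ≤ (H : ℝ) * G)
    (hloghess : ∀ θ τ,
      ‖iteratedFDeriv ℝ 2 (fun θ' => Real.log (p θ' τ)) θ‖ ≤ (H : ℝ) * M)
    (J : EuclideanSpace ℝ (Fin d) → ℝ)
    (hJ : ∀ θ, J θ = ∫ τ, Rf τ * p θ τ ∂μ)
    (hJ_smooth : ContDiff ℝ 2 J)
    (hJ_hess : ∀ θ, iteratedFDeriv ℝ 2 J θ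
      = ∫ τ, Rf τ • iteratedFDeriv ℝ 2 (fun θ' => p θ' τ) θ ∂μ) :
    (∀ θ, ‖iteratedFDeriv ℝ 2 J θ‖ ≤ (H : ℝ) * R * (M + (H : ℝ) * G ^ 2) / (1 - γ)) ∧
    (∀ θ₁ θ₂, ‖gradient J θ₁ - gradient J θ₂‖
      ≤ ((H : ℝ) * R * (M + (H : ℝ) * G ^ 2) / (1 - γ)) * ‖θ₁ - θ₂‖) := by
  obtain rfl : J = performanceFunction μ Rf p := funext hJ
  have hL : (H : ℝ) * R * (M + (H : ℝ) * G ^ 2) / (1 - γ)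
      = R / (1 - γ) * ((H : ℝ) * M + ((H : ℝ) * G) ^ 2) := by ring
  obtain ⟨hhess, hsmooth⟩ := performance_function_smooth_general
    (.of_forall fun τ => (abs_of_nonneg (hRf τ).1).trans_le (hRf τ).2)
    (fun θ => .of_forall (hp_pos θ)) hp_norm
    (.of_forall fun τ => (hp_smooth τ).differentiable two_ne_zero)
    (.of_forall fun τ => differentiable_fderiv_of_contDiff_two (hp_smooth τ))
    (fun θ => .of_forall (hscore θ)) (fun θ => .of_forall (hloghess θ))
    (hJ_smooth.differentiable two_ne_zero)
    (differentiable_fderiv_of_contDiff_two hJ_smooth) hJ_hess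
  rw [hL]
  exact ⟨hhess, hsmooth.norm_gradient_sub_le⟩
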